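/- arXiv:2207.10483 — 2 statements merged into one kernel-verified Lean document; each statement's English description precedes it below -/
import Mathlib

section
/- Let H, G_1, …, G_r be finite simple graphs. Then H̄ ≤ ⊕_{d=1}^r Ḡ_d ⊗ Q_d if and only if there exist a function φ : V(H) → ⊔_{d=1}^r V(G_d) and unit vectors u_h ∈ ℂ^{π(φ(h))} (h ∈ V(H)) such that for all distinct non-adjacent vertices h, h' of H, either ¬(φ(h) ≃ φ(h')) or ⟨u_h, u_{h'}⟩ = 0. -/
open scoped Kronecker
open Matrix

namespace NCG

/-- Existence of a cohomomorphism from `T` to `S` (written `T ≤ S`). -/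
def Cohom {A B : Type} [Fintype A] [DecidableEq A] [Fintype B] [DecidableEq B]
    (T : Submodule ℂ (Matrix B B ℂ)) (S : Submodule ℂ (Matrix A A ℂ)) : Prop :=
  ∃ (k : ℕ) (E : Fin k → Matrix A B ℂ),
    (∑ i, (E i)ᴴ * E i) = 1 ∧ ∀ i j : Fin k, ∀ M ∈ S, (E i)ᴴ * M * E j ∈ T

/-- The noncommutative graph `Ḡ` of a classical graph `G`. -/
noncomputable def graphNC {V : Type} [Fintype V] [DecidableEq V] (G : SimpleGraph V) :
    Submodule ℂ (Matrix V V ℂ) :=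
  Submodule.span ℂ {M | ∃ x y : V, (G.Adj x y ∨ x = y) ∧ M = Matrix.single x y 1}

/-- The confusability graph `Q_d = ℂ·I_d` of the noiseless `d`-dimensional quantum channel. -/
noncomputable def qGraph (d : ℕ) : Submodule ℂ (Matrix (Fin d) (Fin d) ℂ) :=
  Submodule.span ℂ {(1 : Matrix (Fin d) (Fin d) ℂ)}

/-- Tensor product of noncommutative graphs. -/
noncomputable def ncTensor {A B : Type} [Fintype A] [DecidableEq A] [Fintype B] [DecidableEq B]
    (S : Submodule ℂ (Matrix A A ℂ)) (T : Submodule ℂ (Matrix B B ℂ)) :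
    Submodule ℂ (Matrix (A × B) (A × B) ℂ) :=
  Submodule.span ℂ {M | ∃ X ∈ S, ∃ Y ∈ T, M = X ⊗ₖ Y}

/-- Direct sum of a finite family of noncommutative graphs. -/
noncomputable def ncDirectSum {ι : Type} [Fintype ι] [DecidableEq ι] {V : ι → Type}
    [∀ i, Fintype (V i)] [∀ i, DecidableEq (V i)]
    (S : ∀ i, Submodule ℂ (Matrix (V i) (V i) ℂ)) :
    Submodule ℂ (Matrix (Σ i, V i) (Σ i, V i) ℂ) where
  carrier := {M | (∀ p q : Σ i, V i, p.1 ≠ q.1 → M p q = 0) ∧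
    ∀ i, (Matrix.of fun x y : V i => M ⟨i, x⟩ ⟨i, y⟩) ∈ S i}
  add_mem' := by
    rintro a b ⟨ha1, ha2⟩ ⟨hb1, hb2⟩
    refine ⟨fun p q h => ?_, fun i => ?_⟩
    · simp [Matrix.add_apply, ha1 p q h, hb1 p q h]
    · have h := (S i).add_mem (ha2 i) (hb2 i)
      exact h
  zero_mem' := by
    refine ⟨fun p q h => rfl, fun i => ?_⟩
    have h0 : (Matrix.of fun x y : V i =>
        (0 : Matrix (Σ j, V j) (Σ j, V j) ℂ) ⟨i, x⟩ ⟨i, y⟩) = 0 := rfl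
    rw [h0]
    exact (S i).zero_mem
  smul_mem' := by
    rintro c a ⟨ha1, ha2⟩
    refine ⟨fun p q h => ?_, fun i => ?_⟩
    · simp [Matrix.smul_apply, ha1 p q h]
    · have h := (S i).smul_mem c (ha2 i)
      exact h

/-- `⊕_{d=1}^r Ḡ_d ⊗ Q_d`, where `G d` plays the role of `G_{d+1}` for `d : Fin r`. -/
noncomputable def bigSum {r : ℕ} {V : Fin r → Type} [∀ d, Fintype (V d)] [∀ d, DecidableEq (V d)]
    (G : ∀ d, SimpleGraph (V d)) :
    Submodule ℂ (Matrix (Σ d : Fin r, V d × Fin (d.1 + 1))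
      (Σ d : Fin r, V d × Fin (d.1 + 1)) ℂ) :=
  ncDirectSum fun d : Fin r => ncTensor (graphNC (G d)) (qGraph (d.1 + 1))

/-- For vertices of a disjoint family of graphs: `g ≃ g'` iff they lie in the same member
graph and are adjacent or equal there. -/
def SimRel {r : ℕ} {V : Fin r → Type} (G : ∀ d, SimpleGraph (V d)) :
    (Σ d, V d) → (Σ d, V d) → Prop :=
  fun p q => ∃ e : p.1 = q.1,
    (G q.1).Adj (cast (congrArg V e) p.2) q.2 ∨ cast (congrArg V e) p.2 = q.2

/-! A Kraus family exhibiting `H̄ ≤ S` assigns to each vertex `h` the `h`-th columns of its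
operators, one of which is nonzero; conversely nonzero vectors `ψ_h` yield the operators
`|ψ_h⟩⟨h|` after normalisation. So `H̄ ≤ S` means that `H` has a family of nonzero vectors with
`⟨ψ_h|M|ψ_h'⟩ = 0` for all `M ∈ S` whenever `h`, `h'` are distinct and non-adjacent. For
`S = ⊕ Ḡ_i ⊗ Q_{n_i}`, this orthogonality says that the components of the two vectors along `g`
and `g'` are orthogonal whenever `g ≃ g'`. One nonzero component of each `ψ_h` therefore
yields `φ(h)` and, after normalisation, `u_h`; conversely take `ψ_h = |φ(h)⟩ ⊗ u_h`. -/

theorem exists_smul_star_dotProduct_self_eq_one {𝕜 A : Type*} [RCLike 𝕜] [Fintype A]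
    {v : A → 𝕜} (hv : v ≠ 0) : ∃ c : 𝕜, star (c • v) ⬝ᵥ (c • v) = 1 := by
  let x : EuclideanSpace 𝕜 A := WithLp.toLp 2 v
  have hx : x ≠ 0 := by simpa [x] using hv
  have hnorm : ‖((‖x‖⁻¹ : ℝ) : 𝕜) • x‖ = 1 := by simpa using norm_smul_inv_norm (𝕜 := 𝕜) hx
  refine ⟨(‖x‖⁻¹ : ℝ), ?_⟩
  have hinner := inner_self_eq_norm_sq_to_K (𝕜 := 𝕜) (((‖x‖⁻¹ : ℝ) : 𝕜) • x)
  rw [hnorm, EuclideanSpace.inner_eq_star_dotProduct, dotProduct_comm] at hinner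
  simpa [x] using hinner

theorem conjTranspose_mul_mul_apply {R A B C D : Type*} [NonUnitalSemiring R] [Star R]
    [Fintype A] [Fintype C] (E : Matrix A B R) (M : Matrix A C R) (F : Matrix C D R)
    (x : B) (y : D) : (Eᴴ * M * F) x y = star (E.col x) ⬝ᵥ M *ᵥ F.col y := by
  rw [Matrix.mul_assoc]
  rfl

theorem exists_col_ne_zero {R A B I : Type*} [Semiring R] [Nontrivial R] [Star R]
    [Fintype A] [DecidableEq B] [Fintype I] {E : I → Matrix A B R}
    (hE : ∑ i, (E i)ᴴ * E i = 1) (x : B) : ∃ i, (E i).col x ≠ 0 := by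
  by_contra! hzero
  have hdiag : (∑ i, (E i)ᴴ * E i) x x = 0 := by
    rw [Matrix.sum_apply]
    exact Finset.sum_eq_zero fun i _ =>
      show star ((E i).col x) ⬝ᵥ (E i).col x = 0 by rw [hzero, dotProduct_zero]
  rw [hE, one_apply_eq] at hdiag
  exact one_ne_zero hdiag

theorem dotProduct_blockDiagonal'_mulVec {R ι : Type*} [NonUnitalNonAssocSemiring R] [Fintype ι]
    [DecidableEq ι] {A B : ι → Type*} [∀ i, Fintype (A i)] [∀ i, Fintype (B i)]
    (N : ∀ i, Matrix (A i) (B i) R) (v : (Σ i, A i) → R) (w : (Σ i, B i) → R) :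
    v ⬝ᵥ blockDiagonal' N *ᵥ w = ∑ i, (fun a => v ⟨i, a⟩) ⬝ᵥ N i *ᵥ fun b => w ⟨i, b⟩ := by
  simp only [dotProduct, mulVec, Fintype.sum_sigma]
  refine Finset.sum_congr rfl fun i _ => Finset.sum_congr rfl fun a _ => ?_
  congr 1
  rw [Fintype.sum_eq_single i fun j hj => ?_]
  · simp only [blockDiagonal'_apply_eq]
  · exact Finset.sum_eq_zero fun b _ => by rw [blockDiagonal'_apply_ne N a b hj.symm, zero_mul]

theorem dotProduct_kronecker_one_mulVec {R A B C : Type*} [CommSemiring R] [Fintype A] [Fintype B]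
    [Fintype C] [DecidableEq C] (X : Matrix A B R) (v : A × C → R) (w : B × C → R) :
    v ⬝ᵥ (X ⊗ₖ (1 : Matrix C C R)) *ᵥ w =
      ∑ x, ∑ y, X x y * ((fun c => v (x, c)) ⬝ᵥ fun c => w (y, c)) := by
  simp only [dotProduct, mulVec, Fintype.sum_prod_type, kroneckerMap_apply, one_apply, mul_ite,
    mul_one, mul_zero, ite_mul, zero_mul, Finset.sum_ite_eq, Finset.mem_univ, if_true,
    Finset.mul_sum]
  refine Finset.sum_congr rfl fun x _ => Finset.sum_comm.trans ?_
  exact Finset.sum_congr rfl fun y _ => Finset.sum_congr rfl fun c _ => mul_left_comm _ _ _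

section Distinguishable

variable {A : Type*} [Fintype A]

/-- The pure states `v` and `w` are perfectly distinguishable after a channel with confusability
graph `S`: the operator `|v⟩⟨w|` is orthogonal to `S`. -/
def Distinguishable (S : Submodule ℂ (Matrix A A ℂ)) (v w : A → ℂ) : Prop :=
  ∀ M ∈ S, star v ⬝ᵥ M *ᵥ w = 0

theorem Distinguishable.smul {S : Submodule ℂ (Matrix A A ℂ)} {v w : A → ℂ}
    (h : Distinguishable S v w) (a b : ℂ) : Distinguishable S (a • v) (b • w) := fun M hM => by
  rw [star_smul, smul_dotProduct, mulVec_smul, dotProduct_smul, h M hM, smul_zero, smul_zero]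

theorem distinguishable_span_iff {s : Set (Matrix A A ℂ)} {v w : A → ℂ} :
    Distinguishable (Submodule.span ℂ s) v w ↔ ∀ M ∈ s, star v ⬝ᵥ M *ᵥ w = 0 := by
  refine ⟨fun h M hM => h M (Submodule.subset_span hM), fun h M hM => ?_⟩
  induction hM using Submodule.span_induction with
  | mem M hM => exact h M hM
  | zero => rw [zero_mulVec, dotProduct_zero]
  | add M N _ _ hM hN => rw [add_mulVec, dotProduct_add, hM, hN, add_zero]
  | smul c M _ hM => rw [smul_mulVec, dotProduct_smul, hM, smul_zero]

end Distinguishable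

section Cohomomorphism

variable {A B : Type} [Fintype A] [DecidableEq A] [Fintype B] [DecidableEq B]

theorem cohom_of_fintype {I : Type*} [Fintype I] {T : Submodule ℂ (Matrix B B ℂ)}
    {S : Submodule ℂ (Matrix A A ℂ)} (E : I → Matrix A B ℂ) (hE : ∑ i, (E i)ᴴ * E i = 1)
    (hT : ∀ i j, ∀ M ∈ S, (E i)ᴴ * M * E j ∈ T) : Cohom T S :=
  ⟨Fintype.card I, E ∘ (Fintype.equivFin I).symm,
    ((Fintype.equivFin I).symm.sum_comp fun i => (E i)ᴴ * E i).trans hE, fun _ _ => hT _ _⟩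

theorem single_mem_graphNC {G : SimpleGraph B} {x y : B} (h : G.Adj x y ∨ x = y) (c : ℂ) :
    single x y c ∈ graphNC G := by
  rw [← mul_one c, ← smul_eq_mul, ← smul_single]
  exact Submodule.smul_mem _ c (Submodule.subset_span ⟨x, y, h, rfl⟩)

theorem apply_eq_zero_of_mem_graphNC {G : SimpleGraph B} {M : Matrix B B ℂ}
    (hM : M ∈ graphNC G) {x y : B} (h : ¬ (G.Adj x y ∨ x = y)) : M x y = 0 := by
  induction hM using Submodule.span_induction with
  | mem M hM =>
    obtain ⟨a, b, hab, rfl⟩ := hM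
    exact single_apply_of_ne _ _ _ _ _ fun ⟨hax, hby⟩ => h (hax ▸ hby ▸ hab)
  | zero => rfl
  | add M N _ _ hM hN => rw [Matrix.add_apply, hM, hN, add_zero]
  | smul c M _ hM => rw [Matrix.smul_apply, hM, smul_zero]

theorem cohom_graphNC_of_unit {H : SimpleGraph B} {S : Submodule ℂ (Matrix A A ℂ)}
    {ψ : B → A → ℂ} (hunit : ∀ h, star (ψ h) ⬝ᵥ ψ h = 1)
    (hψ : ∀ h h', h ≠ h' → ¬ H.Adj h h' → Distinguishable S (ψ h) (ψ h')) :
    Cohom (graphNC H) S := by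
  let Ψ : Matrix A B ℂ := (of ψ)ᵀ
  let E (h : B) : Matrix A B ℂ := Ψ * single h h (1 : ℂ)
  have hsandwich (h h' : B) (M : Matrix A A ℂ) :
      (E h)ᴴ * M * E h' = single h h' (star (ψ h) ⬝ᵥ M *ᵥ ψ h') := by
    calc (E h)ᴴ * M * E h'
        = single h h 1 * (Ψᴴ * M * Ψ) * single h' h' 1 := by
          simp only [E, conjTranspose_mul, conjTranspose_single, star_one, Matrix.mul_assoc]
      _ = single h h' ((Ψᴴ * M * Ψ) h h') := by rw [single_mul_mul_single, one_mul, mul_one]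
      _ = single h h' (star (ψ h) ⬝ᵥ M *ᵥ ψ h') :=
          congrArg (single h h') (conjTranspose_mul_mul_apply Ψ M Ψ h h')
  refine cohom_of_fintype E ?_ fun h h' M hM => ?_
  · have hproj (h : B) : (E h)ᴴ * E h = single h h 1 := by
      simpa only [Matrix.mul_one, one_mulVec, hunit] using hsandwich h h 1
    simp only [hproj, sum_single_one]
  · rw [hsandwich]
    by_cases hadj : H.Adj h h' ∨ h = h'
    · exact single_mem_graphNC hadj _
    · obtain ⟨hadj, hne⟩ := not_or.1 hadj
      rw [hψ h h' hne hadj M hM, single_zero]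
      exact Submodule.zero_mem _

theorem cohom_graphNC_iff {H : SimpleGraph B} {S : Submodule ℂ (Matrix A A ℂ)} :
    Cohom (graphNC H) S ↔ ∃ ψ : B → A → ℂ, (∀ h, ψ h ≠ 0) ∧
      ∀ h h', h ≠ h' → ¬ H.Adj h h' → Distinguishable S (ψ h) (ψ h') := by
  constructor
  · rintro ⟨k, E, hsum, hE⟩
    choose i hi using exists_col_ne_zero hsum
    refine ⟨fun h => (E (i h)).col h, hi, fun h h' hne hadj M hM => ?_⟩
    rw [← conjTranspose_mul_mul_apply]
    exact apply_eq_zero_of_mem_graphNC (hE _ _ M hM) (not_or.2 ⟨hadj, hne⟩)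
  · rintro ⟨ψ, hne, hψ⟩
    choose c hc using fun h => exists_smul_star_dotProduct_self_eq_one (hne h)
    exact cohom_graphNC_of_unit hc fun h h' hh' hadj => (hψ h h' hh' hadj).smul _ _

end Cohomomorphism

theorem distinguishable_graphNC_tensor_qGraph_iff {B : Type} [Fintype B] [DecidableEq B]
    {G : SimpleGraph B} {n : ℕ} {v w : B × Fin n → ℂ} :
    Distinguishable (ncTensor (graphNC G) (qGraph n)) v w ↔
      ∀ x y, G.Adj x y ∨ x = y → star (fun a => v (x, a)) ⬝ᵥ (fun a => w (y, a)) = 0 := by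
  constructor
  · intro h x y hxy
    have hsingle := h (single x y 1 ⊗ₖ 1) (Submodule.subset_span
      ⟨_, single_mem_graphNC hxy 1, 1, Submodule.mem_span_singleton_self _, rfl⟩)
    simpa [dotProduct_kronecker_one_mulVec, single_apply, ite_and, Pi.star_def] using hsingle
  · refine fun h => distinguishable_span_iff.2 ?_
    rintro _ ⟨X, hX, Y, hY, rfl⟩
    obtain ⟨t, rfl⟩ := Submodule.mem_span_singleton.1 hY
    rw [kronecker_smul, smul_mulVec, dotProduct_smul, dotProduct_kronecker_one_mulVec]
    refine smul_eq_zero_of_right t (Finset.sum_eq_zero fun x _ => Finset.sum_eq_zero fun y _ => ?_)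
    by_cases hxy : G.Adj x y ∨ x = y
    · exact mul_eq_zero_of_right _ (h x y hxy)
    · rw [apply_eq_zero_of_mem_graphNC hX hxy, zero_mul]

section DirectSum

variable {ι : Type} [Fintype ι] [DecidableEq ι] {A : ι → Type} [∀ i, Fintype (A i)]
  [∀ i, DecidableEq (A i)] {S : ∀ i, Submodule ℂ (Matrix (A i) (A i) ℂ)}

theorem blockDiagonal'_mem_ncDirectSum_iff {N : ∀ i, Matrix (A i) (A i) ℂ} :
    blockDiagonal' N ∈ ncDirectSum S ↔ ∀ i, N i ∈ S i := by
  have hblock (i : ι) : (of fun x y => blockDiagonal' N ⟨i, x⟩ ⟨i, y⟩) = N i :=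
    congrFun (blockDiag'_blockDiagonal' N) i
  refine ⟨fun h i => hblock i ▸ h.2 i, fun h => ⟨fun p q hpq => ?_, fun i => ?_⟩⟩
  · exact blockDiagonal'_apply_ne N p.2 q.2 hpq
  · exact (hblock i).symm ▸ h i

theorem blockDiagonal'_blockDiag'_of_mem_ncDirectSum {M : Matrix (Σ i, A i) (Σ i, A i) ℂ}
    (hM : M ∈ ncDirectSum S) : blockDiagonal' (blockDiag' M) = M := by
  ext ⟨i, x⟩ ⟨j, y⟩
  by_cases hij : i = j
  · subst hij
    rw [blockDiagonal'_apply_eq, blockDiag'_apply]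
  · rw [blockDiagonal'_apply_ne _ _ _ hij, hM.1 _ _ hij]

theorem distinguishable_ncDirectSum_iff {v w : (Σ i, A i) → ℂ} :
    Distinguishable (ncDirectSum S) v w ↔
      ∀ i, Distinguishable (S i) (fun a => v ⟨i, a⟩) fun a => w ⟨i, a⟩ := by
  constructor
  · intro h i M hM
    have hmem : blockDiagonal' (Pi.single i M) ∈ ncDirectSum S :=
      blockDiagonal'_mem_ncDirectSum_iff.2 fun j => by
        obtain rfl | hj := eq_or_ne j i
        · rwa [Pi.single_eq_same]
        · exact Pi.single_eq_of_ne (M := fun i => Matrix (A i) (A i) ℂ) hj M ▸ Submodule.zero_mem _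
    have hsum := h _ hmem
    rw [dotProduct_blockDiagonal'_mulVec, Fintype.sum_eq_single i fun j hj => by
      rw [Pi.single_eq_of_ne hj, zero_mulVec, dotProduct_zero]] at hsum
    rwa [Pi.single_eq_same] at hsum
  · intro h M hM
    rw [← blockDiagonal'_blockDiag'_of_mem_ncDirectSum hM, dotProduct_blockDiagonal'_mulVec]
    exact Finset.sum_eq_zero fun i _ => h i _ (hM.2 i)

end DirectSum

section GraphFamily

variable {ι : Type*} {V : ι → Type*} {n : ι → ℕ} {R : Type*} [Zero R]

/-- The relation `g ≃ g'` on the vertices of a family of graphs over an arbitrary index type. -/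
def AdjOrEq (G : ∀ i, SimpleGraph (V i)) (p q : Σ i, V i) : Prop :=
  ∃ e : p.1 = q.1, (G q.1).Adj (cast (congrArg V e) p.2) q.2 ∨ cast (congrArg V e) p.2 = q.2

/-- The component `(⟨g| ⊗ I) v` of a vector `v ∈ ⊕_i R^{V i} ⊗ R^{n i}` along a vertex `g`. -/
def component (v : (Σ i, V i × Fin (n i)) → R) (p : Σ i, V i) : Fin (n p.1) → R :=
  fun a => v ⟨p.1, p.2, a⟩

/-- The vector `|g⟩ ⊗ u` of `⊕_i R^{V i} ⊗ R^{n i}`. -/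
noncomputable def ketTensor (p : Σ i, V i) (u : Fin (n p.1) → R) : (Σ i, V i × Fin (n i)) → R :=
  Function.extend (fun a => ⟨p.1, p.2, a⟩) u 0

theorem component_ketTensor_self (p : Σ i, V i) (u : Fin (n p.1) → R) :
    component (ketTensor p u) p = u := by
  have hinj : Function.Injective fun a : Fin (n p.1) =>
      (⟨p.1, p.2, a⟩ : Σ i, V i × Fin (n i)) := fun a b hab => by simpa using hab
  exact funext fun a => hinj.extend_apply u 0 a

theorem component_ketTensor_of_ne {p q : Σ i, V i} (hqp : q ≠ p) (u : Fin (n p.1) → R) :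
    component (ketTensor p u) q = 0 := by
  refine funext fun a => Function.extend_apply' u _ _ ?_
  rintro ⟨b, hb⟩
  exact hqp (congrArg (fun s : Σ i, V i × Fin (n i) => (⟨s.1, s.2.1⟩ : Σ i, V i)) hb).symm

theorem ketTensor_ne_zero (p : Σ i, V i) {u : Fin (n p.1) → R} (hu : u ≠ 0) :
    ketTensor p u ≠ 0 := by
  intro hzero
  rw [← component_ketTensor_self p u, hzero] at hu
  exact hu rfl

theorem exists_component_ne_zero {v : (Σ i, V i × Fin (n i)) → R} (hv : v ≠ 0) :
    ∃ p, component v p ≠ 0 := by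
  contrapose! hv
  exact funext fun s => congrFun (hv ⟨s.1, s.2.1⟩) s.2.2

end GraphFamily

section GraphFamilySum

variable {ι : Type} [Fintype ι] [DecidableEq ι] {V : ι → Type} [∀ i, Fintype (V i)]
  [∀ i, DecidableEq (V i)] {n : ι → ℕ} {G : ∀ i, SimpleGraph (V i)}

theorem distinguishable_sum_graphNC_tensor_qGraph_iff {v w : (Σ i, V i × Fin (n i)) → ℂ} :
    Distinguishable (ncDirectSum fun i => ncTensor (graphNC (G i)) (qGraph (n i))) v w ↔
      ∀ p q, AdjOrEq G p q → ∀ e : p.1 = q.1,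
        star (component v p) ⬝ᵥ (fun a => component w q (Fin.cast (congrArg n e) a)) = 0 := by
  simp only [distinguishable_ncDirectSum_iff, distinguishable_graphNC_tensor_qGraph_iff]
  constructor
  · rintro h ⟨i, x⟩ ⟨j, y⟩ ⟨e, hxy⟩ _
    obtain rfl : i = j := e
    exact h i x y hxy
  · exact fun h i x y hxy => h ⟨i, x⟩ ⟨i, y⟩ ⟨rfl, hxy⟩ rfl

theorem distinguishable_ketTensor {p q : Σ i, V i} {u : Fin (n p.1) → ℂ} {w : Fin (n q.1) → ℂ}
    (h : AdjOrEq G p q → ∀ e : p.1 = q.1,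
      star u ⬝ᵥ (fun a => w (Fin.cast (congrArg n e) a)) = 0) :
    Distinguishable (ncDirectSum fun i => ncTensor (graphNC (G i)) (qGraph (n i)))
      (ketTensor p u) (ketTensor q w) := by
  refine distinguishable_sum_graphNC_tensor_qGraph_iff.2 fun p' q' hpq e => ?_
  by_cases hp : p' = p
  · by_cases hq : q' = q
    · subst hp hq
      simpa only [component_ketTensor_self] using h hpq e
    · rw [component_ketTensor_of_ne hq]
      exact dotProduct_zero _
  · rw [component_ketTensor_of_ne hp, star_zero, zero_dotProduct]

end GraphFamilySum

theorem cohom_from_graph_iff_general {ι : Type} [Fintype ι] [DecidableEq ι] {V : ι → Type}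
    [∀ i, Fintype (V i)] [∀ i, DecidableEq (V i)] (n : ι → ℕ) (G : ∀ i, SimpleGraph (V i))
    {VH : Type} [Fintype VH] [DecidableEq VH] (H : SimpleGraph VH) :
    Cohom (graphNC H) (ncDirectSum fun i => ncTensor (graphNC (G i)) (qGraph (n i))) ↔
      ∃ (φ : VH → Σ i, V i) (u : ∀ h : VH, Fin (n (φ h).1) → ℂ),
        (∀ h, star (u h) ⬝ᵥ u h = 1) ∧
        ∀ h h', h ≠ h' → ¬ H.Adj h h' →
          (¬ AdjOrEq G (φ h) (φ h') ∨
            ∀ e : (φ h).1 = (φ h').1,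
              star (u h) ⬝ᵥ (fun a => u h' (Fin.cast (congrArg n e) a)) = 0) := by
  simp only [cohom_graphNC_iff, ← imp_iff_not_or]
  constructor
  · rintro ⟨ψ, hne, hψ⟩
    choose φ hφ using fun h => exists_component_ne_zero (hne h)
    choose c hc using fun h => exists_smul_star_dotProduct_self_eq_one (hφ h)
    refine ⟨φ, fun h => c h • component (ψ h) (φ h), hc, fun h h' hh' hadj => ?_⟩
    have hscaled := (hψ h h' hh' hadj).smul (c h) (c h')
    exact distinguishable_sum_graphNC_tensor_qGraph_iff.1 hscaled (φ h) (φ h')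
  · rintro ⟨φ, u, hu, horth⟩
    have hne (h : VH) : u h ≠ 0 := fun hzero => by simpa [hzero] using hu h
    exact ⟨fun h => ketTensor (φ h) (u h), fun h => ketTensor_ne_zero _ (hne h),
      fun h h' hh' hadj => distinguishable_ketTensor (horth h h' hh' hadj)⟩

theorem cohom_from_graph_iff
    {r : ℕ} {V : Fin r → Type} [∀ d, Fintype (V d)] [∀ d, DecidableEq (V d)]
    (G : ∀ d, SimpleGraph (V d))
    {VH : Type} [Fintype VH] [DecidableEq VH] (H : SimpleGraph VH) :
    Cohom (graphNC H) (bigSum G) ↔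
      ∃ (φ : VH → Σ d, V d) (u : ∀ h : VH, Fin ((φ h).1.1 + 1) → ℂ),
        (∀ h, star (u h) ⬝ᵥ u h = 1) ∧
        ∀ h h', h ≠ h' → ¬ H.Adj h h' →
          (¬ SimRel G (φ h) (φ h') ∨
            ∀ e : (φ h).1 = (φ h').1,
              star (u h) ⬝ᵥ
                (fun i => u h' (Fin.cast (congrArg (fun d : Fin r => d.1 + 1) e) i)) = 0) :=
  cohom_from_graph_iff_general (fun d : Fin r => d.1 + 1) G H

end NCG
end

section
/- For a real number α, the exponent α is admissible for the fractional Haemers bound over the complex numbers H_f^ℂ if and only if α ≥ 1; that is, the functional (H_f^ℂ)_α defined by (H_f^ℂ)_α(⊕_{d=1}^r Ḡ_d ⊗ Q_d) = ∑_{d=1}^r H_f^ℂ(G_d)·d^α is monotone under cohomomorphisms of noncommutative graphs of this form exactly when α ≥ 1. -/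
open scoped Kronecker
open Matrix

namespace NCG

/-- The extension `F_α` of a graph parameter `F` with exponent `α` is monotone under
cohomomorphisms of noncommutative graphs of the form `⊕_{d=1}^r Ḡ_d ⊗ Q_d`
(the exponent `α` is admissible for `F`). -/
def MonotoneExt (F : ∀ (V : Type) [Fintype V] [DecidableEq V], SimpleGraph V → ℝ)
    (α : ℝ) : Prop :=
  ∀ (r s : ℕ) (V : Fin r → Type) (W : Fin s → Type)
    [∀ d, Fintype (V d)] [∀ d, DecidableEq (V d)]
    [∀ d, Fintype (W d)] [∀ d, DecidableEq (W d)]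
    (G : ∀ d, SimpleGraph (V d)) (H : ∀ d, SimpleGraph (W d)),
    Cohom (bigSum H) (bigSum G) →
    ∑ d : Fin s, F (W d) (H d) * ((d.1 + 1 : ℕ) : ℝ) ^ α ≤
      ∑ d : Fin r, F (V d) (G d) * ((d.1 + 1 : ℕ) : ℝ) ^ α

/-- The fractional Haemers bound of a graph over a field `F`. -/
noncomputable def fracHaemers (F : Type) [Field F] {V : Type} [Fintype V] [DecidableEq V]
    (G : SimpleGraph V) : ℝ :=
  sInf {t : ℝ | ∃ (a b : ℕ) (S : V → Submodule F (Fin a → F)), 0 < b ∧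
    (∀ g, Module.finrank F (S g) = b) ∧
    (∀ g, S g ⊓ (⨆ g' ∈ {g' : V | g' ≠ g ∧ ¬ G.Adj g g'}, S g') = ⊥) ∧
    t = (a : ℝ) / (b : ℝ)}

/-!
A cohomomorphism from `⊕ H̄_e ⊗ Q_e` to `⊕ Ḡ_d ⊗ Q_d` can be cut down to a single operator `F` whose
columns over a vertex `p` of `⊔ H_e` do not vanish and are supported over a single vertex `f p` of
`⊔ G_d`. These columns are orthogonal of equal norm, so `f p` lies at least at the level of `p`.

Up to arbitrarily small error, the fractional Haemers bound of `G` is `rank Z / b` for a matrix `Z`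
of `b × b` blocks that fits `G`. Conjugation by `F ⊗ I_b` carries `⊕ Z_d ⊗ I_d` to some
`⊕ Z'_e ⊗ I_e`, where `Z'_e` fits `H_e` and the rank has not increased. Because `f` never lowers
levels, this still works when the `Z_d` with `d < m` are replaced by `0`, which gives the inequality
of exponent one for the part of each sum above any level `m`. A summation by parts over the levels,
with weights `d ^ (α - 1)`, then gives every exponent `α ≥ 1`.

Conversely, two isolated points are below a qubit, so an admissible `α` satisfies `2 ≤ 2 ^ α`.
-/

section Rank

variable {K m n : Type*} [Field K] [Fintype n]

theorem rank_eq_card_of_factorization {p : Type*} [Fintype m] [Fintype p] [DecidableEq p]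
    {A : Matrix m n K} {B : Matrix m p K} {C : Matrix p n K} {L : Matrix p m K} {R : Matrix n p K}
    (hBC : B * C = A) (hLR : L * A * R = 1) : A.rank = Fintype.card p := by
  refine le_antisymm ?_ ?_
  · exact hBC ▸ (rank_mul_le_left B C).trans (rank_le_card_width B)
  · rw [← rank_one (R := K) (n := p), ← hLR]
    exact (rank_mul_le_left _ _).trans (rank_mul_le_right _ _)

theorem exists_rank_factorization [Fintype m] (A : Matrix m n K) :
    ∃ (B : Matrix m (Fin A.rank) K) (C : Matrix (Fin A.rank) n K)
      (L : Matrix (Fin A.rank) m K) (R : Matrix n (Fin A.rank) K),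
      B * C = A ∧ L * A * R = 1 := by
  classical
  let e : LinearMap.range A.mulVecLin ≃ₗ[K] (Fin A.rank → K) :=
    (Module.finBasisOfFinrankEq K _ rfl).equivFun
  let inc : (Fin A.rank → K) →ₗ[K] m → K :=
    (LinearMap.range A.mulVecLin).subtype ∘ₗ e.symm.toLinearMap
  let proj : (n → K) →ₗ[K] Fin A.rank → K := e.toLinearMap ∘ₗ A.mulVecLin.rangeRestrict
  obtain ⟨l, hl⟩ := inc.exists_leftInverse_of_injective <| LinearMap.ker_eq_bot.2 <|
    (Submodule.subtype_injective _).comp e.symm.injective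
  obtain ⟨ρ, hρ⟩ := proj.exists_rightInverse_of_surjective <| LinearMap.range_eq_top.2 <|
    e.surjective.comp A.mulVecLin.surjective_rangeRestrict
  have inc_mul_proj : inc.toMatrix' * proj.toMatrix' = A := by
    have inc_comp_proj : inc ∘ₗ proj = Matrix.toLin' A := by
      ext
      simp [inc, proj]
    rw [← LinearMap.toMatrix'_comp, inc_comp_proj, LinearMap.toMatrix'_toLin']
  have l_mul_inc : l.toMatrix' * inc.toMatrix' = 1 := by
    rw [← LinearMap.toMatrix'_comp, hl, LinearMap.toMatrix'_id]
  have proj_mul_ρ : proj.toMatrix' * ρ.toMatrix' = 1 := by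
    rw [← LinearMap.toMatrix'_comp, hρ, LinearMap.toMatrix'_id]
  refine ⟨inc.toMatrix', proj.toMatrix', l.toMatrix', ρ.toMatrix', inc_mul_proj, ?_⟩
  calc l.toMatrix' * A * ρ.toMatrix'
      = (l.toMatrix' * inc.toMatrix') * (proj.toMatrix' * ρ.toMatrix') := by
        simp only [← inc_mul_proj, Matrix.mul_assoc]
    _ = 1 := by rw [l_mul_inc, proj_mul_ρ, Matrix.one_mul]

theorem rank_blockDiagonal' {ι : Type*} [Fintype ι] [DecidableEq ι] {m n : ι → Type*}
    [∀ i, Finite (m i)] [∀ i, Fintype (n i)] (A : ∀ i, Matrix (m i) (n i) K) :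
    (blockDiagonal' A).rank = ∑ i, (A i).rank := by
  have := fun i => Fintype.ofFinite (m i)
  choose B C L R hBC hLR using fun i => exists_rank_factorization (A i)
  have block_mul : blockDiagonal' B * blockDiagonal' C = blockDiagonal' A := by
    simp only [← blockDiagonal'_mul, hBC]
  have block_one : blockDiagonal' L * blockDiagonal' A * blockDiagonal' R = 1 := by
    simp only [← blockDiagonal'_mul, hLR]
    exact blockDiagonal'_one
  rw [rank_eq_card_of_factorization block_mul block_one, Fintype.card_sigma]
  simp only [Fintype.card_fin]

theorem rank_kronecker_one {κ : Type*} [Finite m] [Fintype κ] [DecidableEq κ]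
    (A : Matrix m n K) : (A ⊗ₖ (1 : Matrix κ κ K)).rank = A.rank * Fintype.card κ := by
  have := Fintype.ofFinite m
  obtain ⟨B, C, L, R, hBC, hLR⟩ := exists_rank_factorization A
  have kron_mul : B ⊗ₖ (1 : Matrix κ κ K) * C ⊗ₖ (1 : Matrix κ κ K) = A ⊗ₖ 1 := by
    rw [← mul_kronecker_mul, hBC, Matrix.one_mul]
  have kron_one : L ⊗ₖ (1 : Matrix κ κ K) * A ⊗ₖ (1 : Matrix κ κ K) *
      R ⊗ₖ (1 : Matrix κ κ K) = 1 := by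
    rw [← mul_kronecker_mul, ← mul_kronecker_mul, hLR, Matrix.one_mul, Matrix.one_mul,
      one_kronecker_one]
  rw [rank_eq_card_of_factorization kron_mul kron_one, Fintype.card_prod, Fintype.card_fin]

end Rank

section FittingMatrices

/-- The independence condition of a subspace representation of `G`: the subspace of each vertex
meets the sum of the subspaces of its non-neighbours trivially. Non-neighbours are the neighbours
in `Gᶜ`. -/
def IsSubspaceRep {K M V : Type*} [Field K] [AddCommGroup M] [Module K M] (G : SimpleGraph V)
    (S : V → Submodule K M) : Prop :=
  ∀ v, Disjoint (S v) (⨆ w, ⨆ _ : Gᶜ.Adj v w, S w)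

/-- A matrix with `β × β` blocks indexed by the vertices of `G` fits `G` if its diagonal blocks are
invertible and its blocks at distinct non-adjacent vertices vanish; for a one-element `β` these are
the matrices in the definition of the Haemers bound. -/
structure Fits {K V β : Type*} [Field K] [Fintype β] [DecidableEq β] (G : SimpleGraph V)
    (Z : Matrix (V × β) (V × β) K) : Prop where
  isUnit_diag (v : V) : IsUnit (Z.submatrix (Prod.mk v) (Prod.mk v))
  eq_zero {v w : V} : Gᶜ.Adj v w → ∀ b c, Z (v, b) (w, c) = 0

variable {K V : Type*} [Field K] {G : SimpleGraph V}

theorem fits_one [DecidableEq V] (G : SimpleGraph V) (β : Type*) [Fintype β] [DecidableEq β] :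
    Fits G (1 : Matrix (V × β) (V × β) K) where
  isUnit_diag v := by
    rw [submatrix_one _ (Prod.mk_right_injective v)]
    exact isUnit_one
  eq_zero h b c := one_apply_ne fun heq => h.ne (congrArg Prod.fst heq)

theorem Fits.exists_isSubspaceRep [Fintype V] {β : Type*} [Fintype β] [DecidableEq β]
    {Z : Matrix (V × β) (V × β) K} (hZ : Fits G Z) :
    ∃ S : V → Submodule K (Fin Z.rank → K),
      (∀ v, Module.finrank K (S v) = Fintype.card β) ∧ IsSubspaceRep G S := by
  obtain ⟨B, C, -, -, hBC, -⟩ := exists_rank_factorization Z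
  let row v := B.submatrix (Prod.mk v) id
  let col v := C.submatrix id (Prod.mk v)
  have row_mul_col v w : row v * col w = Z.submatrix (Prod.mk v) (Prod.mk w) :=
    (submatrix_mul B C _ _ _ Function.bijective_id).symm.trans (by rw [hBC])
  have injective_row_col v : Function.Injective ((row v).mulVecLin ∘ (col v).mulVecLin) := by
    rw [← LinearMap.coe_comp, ← mulVecLin_mul, row_mul_col]
    exact mulVec_injective_of_isUnit (hZ.isUnit_diag v)
  refine ⟨fun v => LinearMap.range (col v).mulVecLin, fun v => ?_, fun v => ?_⟩
  · rw [LinearMap.finrank_range_of_inj (injective_row_col v).of_comp,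
      Module.finrank_fintype_fun_eq_card]
  · have le_ker : (⨆ w, ⨆ _ : Gᶜ.Adj v w, LinearMap.range (col w).mulVecLin) ≤
        LinearMap.ker (row v).mulVecLin := by
      refine iSup₂_le fun w hvw => LinearMap.range_le_ker_iff.2 ?_
      have block_eq_zero : row v * col w = 0 := by
        rw [row_mul_col]
        exact Matrix.ext (hZ.eq_zero hvw)
      rw [← mulVecLin_mul, block_eq_zero, mulVecLin_zero]
    refine Disjoint.mono_right le_ker (Submodule.disjoint_def.2 ?_)
    rintro _ ⟨x, rfl⟩ hx
    have x_eq_zero : x = 0 := injective_row_col v (by simpa using hx)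
    simp [x_eq_zero]

theorem IsSubspaceRep.exists_dual_maps {M : Type*} [AddCommGroup M] [Module K M]
    {S : V → Submodule K M} (hS : IsSubspaceRep G S) {b : ℕ}
    (e : ∀ v, (Fin b → K) ≃ₗ[K] S v) :
    ∃ proj : V → M →ₗ[K] Fin b → K,
      (∀ v, proj v ∘ₗ (S v).subtype ∘ₗ (e v).toLinearMap = LinearMap.id) ∧
      ∀ v w, Gᶜ.Adj v w → proj v ∘ₗ (S w).subtype ∘ₗ (e w).toLinearMap = 0 := by
  let others v := ⨆ w, ⨆ _ : Gᶜ.Adj v w, S w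
  have ker_eq_bot v :
      LinearMap.ker ((others v).mkQ ∘ₗ (S v).subtype ∘ₗ (e v).toLinearMap) = ⊥ := by
    refine (Submodule.eq_bot_iff _).2 fun x hx => ?_
    have mem_others : (e v x : M) ∈ others v := by simpa using hx
    simpa using Submodule.disjoint_def.1 (hS v) _ (e v x).2 mem_others
  choose l hl using fun v => LinearMap.exists_leftInverse_of_injective _ (ker_eq_bot v)
  refine ⟨fun v => l v ∘ₗ (others v).mkQ, hl, fun v w hvw => LinearMap.ext fun x => ?_⟩
  have mem_others : (e w x : M) ∈ others v :=
    le_iSup₂_of_le (f := fun w _ => S w) w hvw le_rfl (e w x).2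
  simp [(Submodule.Quotient.mk_eq_zero _).2 mem_others]

theorem IsSubspaceRep.exists_fits [Fintype V] {a b : ℕ} {S : V → Submodule K (Fin a → K)}
    (hS : IsSubspaceRep G S) (hb : ∀ v, Module.finrank K (S v) = b) :
    ∃ Z : Matrix (V × Fin b) (V × Fin b) K, Fits G Z ∧ Z.rank ≤ a := by
  let e v := (Module.finBasisOfFinrankEq K (S v) (hb v)).equivFun.symm
  let inc v := (S v).subtype ∘ₗ (e v).toLinearMap
  obtain ⟨proj, proj_inc_self, proj_inc_eq_zero⟩ := hS.exists_dual_maps e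
  let P : Matrix (V × Fin b) (Fin a) K := of fun p => (proj p.1).toMatrix' p.2
  let I : Matrix (Fin a) (V × Fin b) K := of fun i p => (inc p.1).toMatrix' i p.2
  have block_eq v w :
      (P * I).submatrix (Prod.mk v) (Prod.mk w) = (proj v ∘ₗ inc w).toMatrix' := by
    rw [LinearMap.toMatrix'_comp]
    rfl
  refine ⟨P * I, ⟨fun v => ?_, fun {v w} hvw => ?_⟩, ?_⟩
  · rw [block_eq, proj_inc_self, LinearMap.toMatrix'_id]
    exact isUnit_one
  · have block_eq_zero : (P * I).submatrix (Prod.mk v) (Prod.mk w) = 0 := by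
      rw [block_eq, proj_inc_eq_zero v w hvw, map_zero]
    exact Matrix.ext_iff.2 block_eq_zero
  · simpa using (rank_mul_le_left P I).trans (rank_le_card_width P)

theorem Fits.exists_fits_of_dvd [Fintype V] {b c : ℕ}
    {Z : Matrix (V × Fin b) (V × Fin b) K} (hZ : Fits G Z) (hbc : b ∣ c) :
    ∃ Z' : Matrix (V × Fin c) (V × Fin c) K, Fits G Z' ∧ b * Z'.rank = c * Z.rank := by
  obtain ⟨k, rfl⟩ := hbc
  let e : Fin (b * k) ≃ Fin b × Fin k := finProdFinEquiv.symm
  let f : V × Fin (b * k) ≃ (V × Fin b) × Fin k :=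
    ((Equiv.refl V).prodCongr e).trans (Equiv.prodAssoc _ _ _).symm
  refine ⟨(Z ⊗ₖ (1 : Matrix (Fin k) (Fin k) K)).submatrix f f, ⟨fun v => ?_, fun h x y => ?_⟩, ?_⟩
  · let D := Z.submatrix (Prod.mk v) (Prod.mk v)
    have isUnit_kronecker : IsUnit (D ⊗ₖ (1 : Matrix (Fin k) (Fin k) K)) :=
      (hZ.isUnit_diag v).kronecker isUnit_one
    exact (isUnit_submatrix_equiv e e).2 isUnit_kronecker
  · exact mul_eq_zero_of_left (hZ.eq_zero h _ _) _
  · rw [rank_submatrix, rank_kronecker_one, Fintype.card_fin]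
    ring

theorem Fits.rank_of_bot [Fintype V] {β : Type*} [Fintype β] [DecidableEq β]
    {Z : Matrix (V × β) (V × β) K} (hZ : Fits ⊥ Z) :
    Z.rank = Fintype.card V * Fintype.card β := by
  classical
  let e : V × β ≃ Σ _ : V, β := (Equiv.sigmaEquivProd V β).symm
  let D v := Z.submatrix (Prod.mk v) (Prod.mk v)
  have eq_blockDiagonal : Z = (blockDiagonal' D).submatrix e e := by
    ext ⟨v, x⟩ ⟨w, y⟩
    by_cases h : v = w
    · subst h
      exact (blockDiagonal'_apply_eq D v x y).symm
    · exact (hZ.eq_zero (by simpa using h) x y).trans (blockDiagonal'_apply_ne D x y h).symm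
  have rank_D v : (D v).rank = Fintype.card β := rank_of_isUnit _ (hZ.isUnit_diag v)
  rw [eq_blockDiagonal, rank_submatrix, rank_blockDiagonal']
  simp only [rank_D, Finset.sum_const, Finset.card_univ, smul_eq_mul]

end FittingMatrices

section FracHaemers

variable {K V : Type} [Field K] [Fintype V] [DecidableEq V] {G : SimpleGraph V}

theorem fracHaemers_eq_sInf (K : Type) [Field K] (G : SimpleGraph V) :
    fracHaemers K G = sInf {t : ℝ | ∃ (a b : ℕ) (S : V → Submodule K (Fin a → K)), 0 < b ∧
      (∀ v, Module.finrank K (S v) = b) ∧ IsSubspaceRep G S ∧ t = a / b} := by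
  simp only [fracHaemers, IsSubspaceRep, disjoint_iff, SimpleGraph.compl_adj, Set.mem_ofPred_eq,
    ne_comm]

theorem Fits.fracHaemers_le {β : Type} [Fintype β] [DecidableEq β] [Nonempty β]
    {Z : Matrix (V × β) (V × β) K} (hZ : Fits G Z) :
    fracHaemers K G ≤ Z.rank / Fintype.card β := by
  obtain ⟨S, finrank_S, hS⟩ := hZ.exists_isSubspaceRep
  rw [fracHaemers_eq_sInf]
  refine csInf_le ⟨0, ?_⟩ ⟨Z.rank, Fintype.card β, S, Fintype.card_pos, finrank_S, hS, rfl⟩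
  rintro _ ⟨a, b, -, -, -, -, rfl⟩
  positivity

theorem exists_fits_rank_lt {t : ℝ} (ht : fracHaemers K G < t) :
    ∃ (b : ℕ) (Z : Matrix (V × Fin b) (V × Fin b) K), 0 < b ∧ Fits G Z ∧ Z.rank < b * t := by
  obtain ⟨S₁, finrank_S₁, hS₁⟩ := (fits_one (K := K) G Unit).exists_isSubspaceRep
  rw [fracHaemers_eq_sInf] at ht
  obtain ⟨_, ⟨a, b, S, hb, finrank_S, hS, rfl⟩, hlt⟩ := exists_lt_of_csInf_lt
    (by exact ⟨_, _, _, S₁, Fintype.card_pos, finrank_S₁, hS₁, rfl⟩) ht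
  obtain ⟨Z, hZ, rank_le⟩ := hS.exists_fits finrank_S
  refine ⟨b, Z, hb, hZ, ?_⟩
  rw [div_lt_iff₀' (by positivity)] at hlt
  exact lt_of_le_of_lt (by exact_mod_cast rank_le) hlt

theorem exists_fits_rank_lt_of_family {K ι : Type} [Field K] [Finite ι] {V : ι → Type}
    [∀ i, Fintype (V i)] [∀ i, DecidableEq (V i)] {G : ∀ i, SimpleGraph (V i)} {t : ι → ℝ}
    (ht : ∀ i, fracHaemers K (G i) < t i) :
    ∃ (b : ℕ) (Z : ∀ i, Matrix (V i × Fin b) (V i × Fin b) K), 0 < b ∧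
      ∀ i, Fits (G i) (Z i) ∧ (Z i).rank < b * t i := by
  have := Fintype.ofFinite ι
  choose b Z b_pos hZ rank_lt using fun i => exists_fits_rank_lt (ht i)
  choose Z' hZ' rank_Z' using fun i =>
    (hZ i).exists_fits_of_dvd (Finset.dvd_prod_of_mem b (Finset.mem_univ i))
  have prod_pos : 0 < ∏ i, b i := Finset.prod_pos fun i _ => b_pos i
  refine ⟨∏ i, b i, Z', prod_pos, fun i => ⟨hZ' i, ?_⟩⟩
  have b_mul_lt : (b i : ℝ) * (Z' i).rank < b i * ((∏ i, b i : ℕ) * t i) := calc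
    (b i : ℝ) * (Z' i).rank = (∏ i, b i : ℕ) * (Z i).rank := by exact_mod_cast rank_Z' i
    _ < (∏ i, b i : ℕ) * (b i * t i) := by gcongr; exact rank_lt i
    _ = b i * ((∏ i, b i : ℕ) * t i) := by ring
  exact lt_of_mul_lt_mul_left b_mul_lt (Nat.cast_nonneg _)

theorem fracHaemers_bot (K V : Type) [Field K] [Fintype V] [DecidableEq V] :
    fracHaemers K (⊥ : SimpleGraph V) = Fintype.card V := by
  refine le_antisymm ?_ (le_of_forall_gt fun t ht => ?_)
  · simpa using (fits_one (K := K) (⊥ : SimpleGraph V) Unit).fracHaemers_le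
  · obtain ⟨b, Z, _, hZ, rank_lt⟩ := exists_fits_rank_lt ht
    rw [hZ.rank_of_bot, Fintype.card_fin, Nat.cast_mul, mul_comm] at rank_lt
    exact lt_of_mul_lt_mul_left rank_lt (Nat.cast_nonneg _)

end FracHaemers

section Amplification

/-- Index set of the matrices in `⊕_d Ḡ_d ⊗ Q_{d+1}`: a basis vector of `Q_{d+1}` over each vertex
of each `G_d`. -/
abbrev BigIndex {r : ℕ} (V : Fin r → Type*) := Σ d : Fin r, V d × Fin (d.1 + 1)

/-- The vertex of the disjoint union of the `G_d` over which a basis vector of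
`⊕_d Ḡ_d ⊗ Q_{d+1}` lies. -/
def vertex {r : ℕ} {V : Fin r → Type*} (a : BigIndex V) : Σ d, V d :=
  ⟨a.1, a.2.1⟩

/-- The block-diagonal matrix `⊕_d A_d ⊗ I_{d+1}`. -/
def amplify {R : Type*} [MulZeroOneClass R] {r : ℕ} {V : Fin r → Type*}
    (A : ∀ d, Matrix (V d) (V d) R) : Matrix (BigIndex V) (BigIndex V) R :=
  blockDiagonal' fun d => A d ⊗ₖ (1 : Matrix (Fin (d.1 + 1)) (Fin (d.1 + 1)) R)

variable {r : ℕ} {V : Fin r → Type*}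

section Semiring

variable {R : Type*} [CommSemiring R]

theorem amplify_apply_of_vertex_eq [∀ d, DecidableEq (V d)] (A : ∀ d, Matrix (V d) (V d) R)
    {a b : BigIndex V} (h : vertex a = vertex b) :
    amplify A a b = if a = b then A a.1 a.2.1 a.2.1 else 0 := by
  obtain ⟨d, v, k⟩ := a
  obtain ⟨e, w, l⟩ := b
  obtain ⟨rfl, h⟩ := Sigma.mk.inj h
  obtain rfl := eq_of_heq h
  simp [amplify, one_apply]

theorem amplify_one [∀ d, DecidableEq (V d)] :
    amplify (fun d => (1 : Matrix (V d) (V d) R)) = 1 := by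
  simp only [amplify, one_kronecker_one]
  exact blockDiagonal'_one

theorem amplify_mul [∀ d, Fintype (V d)] (A B : ∀ d, Matrix (V d) (V d) R) :
    amplify (fun d => A d * B d) = amplify A * amplify B := by
  simp only [amplify, ← blockDiagonal'_mul, ← mul_kronecker_mul, Matrix.one_mul]

theorem amplify_diagonal [∀ d, DecidableEq (V d)] (c : (Σ d, V d) → R) :
    amplify (fun d => diagonal fun v => c ⟨d, v⟩) = diagonal (c ∘ vertex) := by
  simp only [amplify, ← diagonal_one, diagonal_kronecker_diagonal, mul_one]
  exact blockDiagonal'_diagonal _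

end Semiring

theorem rank_amplify {K : Type*} [Field K] [∀ d, Fintype (V d)]
    (A : ∀ d, Matrix (V d) (V d) K) : (amplify A).rank = ∑ d, (A d).rank * (d.1 + 1) := by
  simp only [amplify, rank_blockDiagonal', rank_kronecker_one, Fintype.card_fin]

/-- The matrix `⊕_d Z_d ⊗ I_{d+1}` for matrices `Z_d` with `β × β` blocks, with the factor `β` moved
to the last place so that an operator `F` between spaces indexed by `BigIndex` acts as `F ⊗ I_β`. -/
def amplifyBlocks {R β : Type*} [MulZeroOneClass R]
    (Z : ∀ d, Matrix (V d × β) (V d × β) R) : Matrix (BigIndex V × β) (BigIndex V × β) R :=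
  of fun p q => amplify (fun d => (Z d).submatrix (·, p.2) (·, q.2)) p.1 q.1

theorem rank_amplifyBlocks {K β : Type*} [Field K] [Fintype β] [∀ d, Fintype (V d)]
    (Z : ∀ d, Matrix (V d × β) (V d × β) K) :
    (amplifyBlocks Z).rank = ∑ d, (Z d).rank * (d.1 + 1) := by
  let e : BigIndex V × β ≃ BigIndex fun d => V d × β :=
    (Equiv.sigmaProdDistrib _ β).trans <| Equiv.sigmaCongrRight fun d =>
      { toFun := fun p => ((p.1.1, p.2), p.1.2)
        invFun := fun p => ((p.1.1, p.2), p.1.2) }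
  have reindex_eq : amplifyBlocks Z = (amplify Z).submatrix e e := by
    ext ⟨⟨d, v, k⟩, x⟩ ⟨⟨d', w, l⟩, y⟩
    by_cases h : d = d'
    · subst h
      simp [amplifyBlocks, amplify, e]
    · simp [amplifyBlocks, amplify, e, blockDiagonal'_apply_ne _ _ _ h]
  rw [reindex_eq, rank_submatrix, rank_amplify]

theorem submatrix_kronecker_one_mul_mul {R l m n o β : Type*} [CommSemiring R] [Fintype m]
    [Fintype n] [Fintype β] [DecidableEq β] (A : Matrix l m R) (X : Matrix (m × β) (n × β) R)
    (B : Matrix n o R) (x y : β) :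
    (A ⊗ₖ (1 : Matrix β β R) * X * B ⊗ₖ (1 : Matrix β β R)).submatrix (·, x) (·, y) =
      A * X.submatrix (·, x) (·, y) * B := by
  ext i j
  simp [Matrix.mul_apply, Fintype.sum_prod_type, one_apply]

end Amplification

section Membership

theorem mem_graphNC_iff {V : Type} [Fintype V] [DecidableEq V] {G : SimpleGraph V}
    {A : Matrix V V ℂ} : A ∈ graphNC G ↔ ∀ v w, Gᶜ.Adj v w → A v w = 0 := by
  refine ⟨fun hA v w hvw => ?_, fun hA => ?_⟩
  · let zeroAt : Submodule ℂ (Matrix V V ℂ) := LinearMap.ker (entryLinearMap ℂ ℂ v w)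
    have graphNC_le : graphNC G ≤ zeroAt := by
      refine Submodule.span_le.2 ?_
      rintro _ ⟨x, y, hxy, rfl⟩
      refine single_apply_of_ne _ _ _ _ _ ?_
      rintro ⟨rfl, rfl⟩
      rw [SimpleGraph.compl_adj] at hvw
      tauto
    exact graphNC_le hA
  · rw [matrix_eq_sum_single A]
    refine Submodule.sum_mem _ fun v _ => Submodule.sum_mem _ fun w _ => ?_
    by_cases hvw : Gᶜ.Adj v w
    · simp [hA v w hvw]
    · rw [← mul_one (A v w), ← smul_eq_mul, ← smul_single]
      refine Submodule.smul_mem _ _ (Submodule.subset_span ⟨v, w, ?_, rfl⟩)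
      rw [SimpleGraph.compl_adj] at hvw
      tauto

theorem mem_ncTensor_qGraph_iff {V : Type} [Fintype V] [DecidableEq V]
    {S : Submodule ℂ (Matrix V V ℂ)} {n : ℕ} {N : Matrix (V × Fin n) (V × Fin n) ℂ} :
    N ∈ ncTensor S (qGraph n) ↔ ∃ A ∈ S, A ⊗ₖ (1 : Matrix (Fin n) (Fin n) ℂ) = N := by
  refine ⟨fun hN => ?_, ?_⟩
  · let kron : Matrix V V ℂ →ₗ[ℂ] Matrix (Fin n) (Fin n) ℂ →ₗ[ℂ] _ := kroneckerBilinear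
    have ncTensor_le : ncTensor S (qGraph n) ≤ S.map (kron.flip 1) := by
      refine Submodule.span_le.2 ?_
      rintro _ ⟨X, hX, Y, hY, rfl⟩
      obtain ⟨c, rfl⟩ := Submodule.mem_span_singleton.1 hY
      exact ⟨c • X, S.smul_mem c hX, (kron.map_smul₂ c X 1).trans ((kron X).map_smul c 1).symm⟩
    exact ncTensor_le hN
  · rintro ⟨A, hA, rfl⟩
    exact Submodule.subset_span ⟨A, hA, 1, Submodule.mem_span_singleton_self 1, rfl⟩

theorem mem_ncDirectSum_iff {ι : Type} [Fintype ι] [DecidableEq ι] {V : ι → Type}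
    [∀ i, Fintype (V i)] [∀ i, DecidableEq (V i)] {S : ∀ i, Submodule ℂ (Matrix (V i) (V i) ℂ)}
    {N : Matrix (Σ i, V i) (Σ i, V i) ℂ} :
    N ∈ ncDirectSum S ↔ ∃ A : ∀ i, Matrix (V i) (V i) ℂ,
      (∀ i, A i ∈ S i) ∧ blockDiagonal' A = N := by
  refine ⟨fun ⟨off, diag⟩ => ⟨_, diag, ?_⟩, ?_⟩
  · ext ⟨i, x⟩ ⟨j, y⟩
    by_cases h : i = j
    · subst h
      exact blockDiagonal'_apply_eq _ i x y
    · rw [blockDiagonal'_apply_ne _ _ _ h, off _ _ h]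
  · rintro ⟨A, hA, rfl⟩
    refine ⟨fun p q h => blockDiagonal'_apply_ne A p.2 q.2 h, fun i => ?_⟩
    simpa only [blockDiagonal'_apply_eq] using! hA i

variable {r : ℕ} {V : Fin r → Type} [∀ d, Fintype (V d)] [∀ d, DecidableEq (V d)]
  {G : ∀ d, SimpleGraph (V d)}

theorem mem_bigSum_iff {N : Matrix (BigIndex V) (BigIndex V) ℂ} :
    N ∈ bigSum G ↔ ∃ A : ∀ d, Matrix (V d) (V d) ℂ,
      (∀ d, A d ∈ graphNC (G d)) ∧ amplify A = N := by
  simp only [bigSum, mem_ncDirectSum_iff, mem_ncTensor_qGraph_iff]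
  refine ⟨fun ⟨B, hB, hN⟩ => ?_, fun ⟨A, hA, hN⟩ => ⟨_, fun d => ⟨A d, hA d, rfl⟩, hN⟩⟩
  choose A hA hAB using hB
  exact ⟨A, hA, by simp only [amplify, hAB, hN]⟩

theorem one_mem_bigSum : 1 ∈ bigSum G :=
  mem_bigSum_iff.2 ⟨fun _ => 1,
    fun _ => mem_graphNC_iff.2 fun _ _ h => one_apply_ne h.ne, amplify_one⟩

theorem diagonal_mul_mul_diagonal_mem_bigSum {N : Matrix (BigIndex V) (BigIndex V) ℂ}
    (hN : N ∈ bigSum G) (c c' : (Σ d, V d) → ℂ) :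
    diagonal (c ∘ vertex) * N * diagonal (c' ∘ vertex) ∈ bigSum G := by
  obtain ⟨A, hA, rfl⟩ := mem_bigSum_iff.1 hN
  refine mem_bigSum_iff.2 ⟨fun d => diagonal (fun v => c ⟨d, v⟩) * A d *
    diagonal (fun v => c' ⟨d, v⟩), fun d => mem_graphNC_iff.2 fun v w h => ?_, ?_⟩
  · simp only [mul_diagonal, diagonal_mul, mem_graphNC_iff.1 (hA d) v w h, mul_zero, zero_mul]
  · rw [amplify_mul, amplify_mul, amplify_diagonal, amplify_diagonal]

end Membership

section Localization

variable {r s : ℕ} {V : Fin r → Type} {W : Fin s → Type}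
  [∀ d, Fintype (V d)] [∀ d, DecidableEq (V d)] [∀ e, Fintype (W e)] [∀ e, DecidableEq (W e)]
  {G : ∀ d, SimpleGraph (V d)} {H : ∀ e, SimpleGraph (W e)}
  {F : Matrix (BigIndex V) (BigIndex W) ℂ} {f : (Σ e, W e) → Σ d, V d}

/-- The single-operator substitute for a cohomomorphism from `bigSum H` to `bigSum G`: conjugation
by `F` maps `bigSum G` into `bigSum H`, and the columns of `F` over a vertex `p` are supported over
the single vertex `f p` and do not all vanish. -/
structure IsVertexLocalized (G : ∀ d, SimpleGraph (V d)) (H : ∀ e, SimpleGraph (W e))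
    (F : Matrix (BigIndex V) (BigIndex W) ℂ) (f : (Σ e, W e) → Σ d, V d) : Prop where
  conj_mem {N : Matrix (BigIndex V) (BigIndex V) ℂ} : N ∈ bigSum G → Fᴴ * N * F ∈ bigSum H
  vertex_eq {a : BigIndex V} {b : BigIndex W} : F a b ≠ 0 → vertex a = f (vertex b)
  exists_ne_zero (p : Σ e, W e) : ∃ a b, vertex b = p ∧ F a b ≠ 0

theorem exists_apply_ne_zero_of_sum_conj_eq_one {m n : Type*} [Fintype m] [DecidableEq n] {k : ℕ}
    {E : Fin k → Matrix m n ℂ} (hE : ∑ i, (E i)ᴴ * E i = 1) (b : n) : ∃ i a, E i a b ≠ 0 := by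
  by_contra! h
  have entry := congrFun₂ hE b b
  simp [Matrix.sum_apply, Matrix.mul_apply, h] at entry

/-- The coordinate projection onto the basis vectors over `u`. -/
def vertexProj (u : Σ d, V d) : Matrix (BigIndex V) (BigIndex V) ℂ :=
  diagonal (Pi.single u 1 ∘ vertex)

omit [∀ d, Fintype (V d)] in
theorem conjTranspose_vertexProj (u : Σ d, V d) : (vertexProj u)ᴴ = vertexProj u := by
  rw [vertexProj, diagonal_conjTranspose]
  congr 1
  ext a
  simp [Pi.single_apply, apply_ite]

theorem Cohom.exists_isVertexLocalized (h : Cohom (bigSum H) (bigSum G)) :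
    ∃ F f, IsVertexLocalized G H F f := by
  obtain ⟨k, E, sum_eq_one, conj_mem⟩ := h
  choose i a ne_zero using fun p : Σ e, W e =>
    exists_apply_ne_zero_of_sum_conj_eq_one sum_eq_one ⟨p.1, p.2, 0⟩
  let f p := vertex (a p)
  -- `F` keeps, over each vertex `p`, the rows over `f p` of one Kraus operator.
  let F := ∑ p, vertexProj (f p) * E (i p) * vertexProj p
  have F_apply (x : BigIndex V) (y : BigIndex W) :
      F x y = if vertex x = f (vertex y) then E (i (vertex y)) x y else 0 := by
    simp only [F, vertexProj, Matrix.sum_apply, mul_diagonal, diagonal_mul, Function.comp_apply,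
      Pi.single_apply]
    rw [Finset.sum_eq_single (vertex y)]
    · simp
    · intro p _ hp
      simp [hp.symm]
    · simp
  refine ⟨F, f, ⟨fun {N} hN => ?_, fun {x y} hxy => ?_, fun p => ⟨a p, ⟨p.1, p.2, 0⟩, rfl, ?_⟩⟩⟩
  · have conj_eq : Fᴴ * N * F = ∑ q, ∑ p, vertexProj p *
        ((E (i p))ᴴ * (vertexProj (f p) * N * vertexProj (f q)) * E (i q)) * vertexProj q := by
      simp only [F, conjTranspose_sum, conjTranspose_mul, conjTranspose_vertexProj, Matrix.sum_mul,
        Matrix.mul_sum, Matrix.mul_assoc]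
    rw [conj_eq]
    exact Submodule.sum_mem _ fun q _ => Submodule.sum_mem _ fun p _ =>
      diagonal_mul_mul_diagonal_mem_bigSum
        (conj_mem _ _ _ (diagonal_mul_mul_diagonal_mem_bigSum hN _ _)) _ _
  · by_contra hne
    exact hxy ((F_apply x y).trans (if_neg hne))
  · rw [F_apply]
    exact (if_pos rfl).trans_ne (ne_zero p)

namespace IsVertexLocalized

theorem conj_apply_of_vertex_eq (hF : IsVertexLocalized G H F f) (A : ∀ d, Matrix (V d) (V d) ℂ)
    {b b' : BigIndex W} (h : vertex b = vertex b') :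
    (Fᴴ * amplify A * F) b b' =
      A (f (vertex b)).1 (f (vertex b)).2 (f (vertex b)).2 * (Fᴴ * F) b b' := by
  set u := f (vertex b)
  have amplify_mul_apply (a : BigIndex V) (ha : vertex a = u) :
      (amplify A * F) a b' = A u.1 u.2 u.2 * F a b' := by
    rw [Matrix.mul_apply, Finset.sum_eq_single a _ (by simp)]
    · rw [amplify_apply_of_vertex_eq A rfl, if_pos rfl, ← ha]
      rfl
    · intro a' _ hne
      by_cases hF0 : F a' b' = 0
      · rw [hF0, mul_zero]
      · have vertex_a' : vertex a = vertex a' := by rw [ha, hF.vertex_eq hF0, ← h]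
        rw [amplify_apply_of_vertex_eq A vertex_a', if_neg hne.symm, zero_mul]
  rw [Matrix.mul_assoc, Matrix.mul_apply, Matrix.mul_apply, Finset.mul_sum]
  refine Finset.sum_congr rfl fun a _ => ?_
  by_cases hF0 : F a b = 0
  · simp [hF0]
  · rw [amplify_mul_apply a (hF.vertex_eq hF0)]
    ring

open scoped ComplexOrder in
theorem exists_gram_eq_amplify (hF : IsVertexLocalized G H F f) :
    ∃ C : ∀ e, Matrix (W e) (W e) ℂ, Fᴴ * F = amplify C ∧
      ∀ p : Σ e, W e, C p.1 p.2 p.2 ≠ 0 := by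
  obtain ⟨C, -, hC⟩ := mem_bigSum_iff.1 (by simpa using hF.conj_mem one_mem_bigSum)
  refine ⟨C, hC.symm, fun p C_eq_zero => ?_⟩
  obtain ⟨a, b, rfl, ne_zero⟩ := hF.exists_ne_zero p
  have gram_eq_zero : star (F.col b) ⬝ᵥ F.col b = 0 := calc
    (Fᴴ * F) b b = amplify C b b := by rw [hC]
    _ = C b.1 b.2.1 b.2.1 := by rw [amplify_apply_of_vertex_eq C rfl, if_pos rfl]
    _ = 0 := C_eq_zero
  exact ne_zero (congrFun (dotProduct_star_self_eq_zero.1 gram_eq_zero) a)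

/-- The `p.1 + 1` columns of `F` over `p` are independent, and lie in the span of the
`(f p).1 + 1` basis vectors over `f p`. -/
theorem fst_le_fst (hF : IsVertexLocalized G H F f) (p : Σ e, W e) : p.1.1 ≤ (f p).1.1 := by
  obtain ⟨C, hC, ne_zero⟩ := hF.exists_gram_eq_amplify
  let c := C p.1 p.2 p.2
  let column (k : Fin (p.1.1 + 1)) : BigIndex W := ⟨p.1, p.2, k⟩
  let F' := F.submatrix id column
  have gram_eq : F'ᴴ * F' = diagonal fun _ => c := by
    ext k l
    calc (F'ᴴ * F') k l
        = amplify C (column k) (column l) := congrFun₂ hC _ _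
      _ = if column k = column l then c else 0 := amplify_apply_of_vertex_eq C rfl
      _ = diagonal (fun _ => c) k l := by simp [diagonal_apply, column]
  have le_rank : p.1.1 + 1 ≤ F'.rank := calc
    p.1.1 + 1 = (F'ᴴ * F').rank := by simp [gram_eq, rank_diagonal, c, ne_zero]
    _ ≤ F'.rank := rank_mul_le_right _ _
  let fiber : Finset (BigIndex V) :=
    Finset.univ.image fun k : Fin ((f p).1.1 + 1) => ⟨(f p).1, (f p).2, k⟩
  have rank_le : F'.rank ≤ (f p).1.1 + 1 := calc
    F'.rank ≤ fiber.card := by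
      refine rank_le_card_of_support_subset _ _ fun a ha => ?_
      obtain ⟨k, hk⟩ := Function.ne_iff.1 ha
      have vertex_a : vertex a = f p := hF.vertex_eq hk
      exact Finset.mem_coe.2 (Finset.mem_image.2 (vertex_a ▸ ⟨a.2.2, Finset.mem_univ _, rfl⟩))
    _ ≤ (f p).1.1 + 1 := Finset.card_image_le.trans (Finset.card_fin _).le
  omega

theorem exists_transport (hF : IsVertexLocalized G H F f) {β : Type*}
    [Fintype β] (Z : ∀ d, Matrix (V d × β) (V d × β) ℂ)
    (hZ : ∀ d v w, (G d)ᶜ.Adj v w → ∀ x y, Z d (v, x) (w, y) = 0) :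
    ∃ Z' : ∀ e, Matrix (W e × β) (W e × β) ℂ,
      (∀ e v w, (H e)ᶜ.Adj v w → ∀ x y, Z' e (v, x) (w, y) = 0) ∧
      (∀ p : Σ e, W e, ∃ c : ℂ, c ≠ 0 ∧ (Z' p.1).submatrix (Prod.mk p.2) (Prod.mk p.2) =
        c • (Z (f p).1).submatrix (Prod.mk (f p).2) (Prod.mk (f p).2)) ∧
      ∑ e, (Z' e).rank * (e.1 + 1) ≤ ∑ d, (Z d).rank * (d.1 + 1) := by
  classical
  let slice x y d := (Z d).submatrix (·, x) (·, y)
  have conj_mem x y : Fᴴ * amplify (slice x y) * F ∈ bigSum H :=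
    hF.conj_mem <| mem_bigSum_iff.2
      ⟨_, fun d => mem_graphNC_iff.2 fun v w h => hZ d v w h x y, rfl⟩
  choose A A_mem amplify_A using fun x y => mem_bigSum_iff.1 (conj_mem x y)
  obtain ⟨C, hC, C_ne_zero⟩ := hF.exists_gram_eq_amplify
  let Z' e : Matrix (W e × β) (W e × β) ℂ := of fun p q => A p.2 q.2 e p.1 q.1
  refine ⟨Z', fun e v w h x y => mem_graphNC_iff.1 (A_mem x y e) v w h,
    fun p => ⟨C p.1 p.2 p.2, C_ne_zero p, ?_⟩, ?_⟩
  · ext x y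
    let b : BigIndex W := ⟨p.1, p.2, 0⟩
    calc A x y p.1 p.2 p.2
        = amplify (A x y) b b := by rw [amplify_apply_of_vertex_eq _ rfl, if_pos rfl]
      _ = slice x y (f p).1 (f p).2 (f p).2 * amplify C b b := by
        rw [amplify_A, hF.conj_apply_of_vertex_eq _ rfl, hC]
        rfl
      _ = C p.1 p.2 p.2 * Z (f p).1 ((f p).2, x) ((f p).2, y) := by
        rw [amplify_apply_of_vertex_eq _ rfl, if_pos rfl, mul_comm]
        rfl
  · have conj_eq : amplifyBlocks Z' =
        Fᴴ ⊗ₖ (1 : Matrix β β ℂ) * amplifyBlocks Z * F ⊗ₖ (1 : Matrix β β ℂ) := by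
      ext ⟨b, x⟩ ⟨b', y⟩
      exact congrFun₂ ((amplify_A x y).trans
        (submatrix_kronecker_one_mul_mul Fᴴ (amplifyBlocks Z) F x y).symm) b b'
    rw [← rank_amplifyBlocks, ← rank_amplifyBlocks, conj_eq]
    exact (rank_mul_le_left _ _).trans (rank_mul_le_right _ _)

theorem sum_filter_fracHaemers_le_of_lt (hF : IsVertexLocalized G H F f) (m : ℕ)
    {t : Fin r → ℝ} (ht : ∀ d, fracHaemers ℂ (G d) < t d) :
    ∑ e with m ≤ e.1, fracHaemers ℂ (H e) * (e.1 + 1) ≤ ∑ d with m ≤ d.1, t d * (d.1 + 1) := by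
  obtain ⟨b, Z, b_pos, hZ⟩ := exists_fits_rank_lt_of_family ht
  have : Nonempty (Fin b) := ⟨⟨0, b_pos⟩⟩
  obtain ⟨Z', Z'_eq_zero, Z'_diag, rank_le⟩ :=
    hF.exists_transport (fun d => if m ≤ d.1 then Z d else 0) fun d v w hvw x y => by
      split_ifs
      · exact (hZ d).1.eq_zero hvw x y
      · rfl
  have Z'_fits (e : Fin s) (he : m ≤ e.1) : Fits (H e) (Z' e) := by
    refine ⟨fun v => ?_, fun {v w} => Z'_eq_zero e v w⟩
    obtain ⟨c, c_ne_zero, hc⟩ := Z'_diag ⟨e, v⟩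
    rw [hc, if_pos (he.trans (hF.fst_le_fst ⟨e, v⟩))]
    exact ((hZ _).1.isUnit_diag _).smul (Units.mk0 c c_ne_zero)
  have b_mul_le (e : Fin s) (he : m ≤ e.1) : b * fracHaemers ℂ (H e) ≤ (Z' e).rank := by
    have h := (Z'_fits e he).fracHaemers_le
    rwa [Fintype.card_fin, le_div_iff₀' (by positivity)] at h
  refine le_of_mul_le_mul_left ?_ (Nat.cast_pos.2 b_pos : (0 : ℝ) < b)
  calc (b : ℝ) * ∑ e with m ≤ e.1, fracHaemers ℂ (H e) * (e.1 + 1)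
      = ∑ e with m ≤ e.1, b * fracHaemers ℂ (H e) * (e.1 + 1) := by
        simp only [Finset.mul_sum, mul_assoc]
    _ ≤ ∑ e with m ≤ e.1, ((Z' e).rank : ℝ) * (e.1 + 1) := by
        gcongr with e he
        exact b_mul_le e (Finset.mem_filter.1 he).2
    _ ≤ ∑ e, ((Z' e).rank : ℝ) * (e.1 + 1) :=
        Finset.sum_le_univ_sum_of_nonneg fun e => by positivity
    _ ≤ ∑ d, ((if m ≤ d.1 then Z d else 0).rank : ℝ) * (d.1 + 1) := by exact_mod_cast rank_le
    _ = ∑ d with m ≤ d.1, ((Z d).rank : ℝ) * (d.1 + 1) := by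
        rw [Finset.sum_filter]
        refine Finset.sum_congr rfl fun d _ => ?_
        split_ifs <;> simp
    _ ≤ ∑ d with m ≤ d.1, b * t d * (d.1 + 1) := by
        gcongr with d
        exact (hZ d).2.le
    _ = b * ∑ d with m ≤ d.1, t d * (d.1 + 1) := by simp only [Finset.mul_sum, mul_assoc]

theorem sum_filter_fracHaemers_le (hF : IsVertexLocalized G H F f) (m : ℕ) :
    ∑ e with m ≤ e.1, fracHaemers ℂ (H e) * (e.1 + 1) ≤
      ∑ d with m ≤ d.1, fracHaemers ℂ (G d) * (d.1 + 1) := by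
  let bound (ε : ℝ) := ∑ d : Fin r with m ≤ d.1, (fracHaemers ℂ (G d) + ε) * (d.1 + 1)
  have continuous_bound : Continuous bound := by fun_prop
  have tendsto_bound : Filter.Tendsto bound (nhdsWithin 0 (Set.Ioi 0)) (nhds (bound 0)) :=
    continuous_bound.continuousWithinAt
  have le_bound (ε : ℝ) (hε : 0 < ε) :
      ∑ e with m ≤ e.1, fracHaemers ℂ (H e) * (e.1 + 1) ≤ bound ε :=
    hF.sum_filter_fracHaemers_le_of_lt m fun d => lt_add_of_pos_right _ hε
  simpa only [bound, add_zero] using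
    ge_of_tendsto tendsto_bound (Filter.eventually_of_mem self_mem_nhdsWithin le_bound)

end IsVertexLocalized

end Localization

section LayerCake

theorem sum_mul_comp_eq_layers {ι : Type*} (I : Finset ι) (x : ι → ℝ) (level : ι → ℕ) (c : ℕ → ℝ)
    {n : ℕ} (hn : ∀ i ∈ I, level i ≤ n) :
    ∑ i ∈ I, x i * c (level i) =
      c 0 * ∑ i ∈ I, x i +
        ∑ m ∈ Finset.range n, (c (m + 1) - c m) * ∑ i ∈ I with m < level i, x i := by
  have telescope i (hi : i ∈ I) : c (level i) =
      c 0 + ∑ m ∈ Finset.range n, if m < level i then c (m + 1) - c m else 0 := by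
    have range_filter : (Finset.range n).filter (· < level i) = Finset.range (level i) := by
      have := hn i hi
      ext m
      simp only [Finset.mem_filter, Finset.mem_range]
      omega
    rw [← Finset.sum_filter, range_filter, Finset.sum_range_sub, add_sub_cancel]
  calc ∑ i ∈ I, x i * c (level i)
      = ∑ i ∈ I, (c 0 * x i +
          ∑ m ∈ Finset.range n, if m < level i then (c (m + 1) - c m) * x i else 0) := by
        refine Finset.sum_congr rfl fun i hi => ?_
        rw [telescope i hi, mul_comm, add_mul, Finset.sum_mul]
        simp only [ite_mul, zero_mul]
    _ = c 0 * ∑ i ∈ I, x i +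
          ∑ m ∈ Finset.range n, (c (m + 1) - c m) * ∑ i ∈ I with m < level i, x i := by
        rw [Finset.sum_add_distrib, ← Finset.mul_sum, Finset.sum_comm]
        simp only [← Finset.sum_filter, Finset.mul_sum]

theorem sum_mul_comp_le_of_tails_le {ι κ : Type*} [Fintype ι] [Fintype κ] {x : ι → ℝ} {y : κ → ℝ}
    {a : ι → ℕ} {b : κ → ℕ}
    (tails_le : ∀ m, ∑ i with m ≤ a i, x i ≤ ∑ j with m ≤ b j, y j) {c : ℕ → ℝ} (c_zero : 0 ≤ c 0)
    (c_mono : Monotone c) : ∑ i, x i * c (a i) ≤ ∑ j, y j * c (b j) := by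
  let n := Finset.univ.sup a + Finset.univ.sup b
  have a_le i (hi : i ∈ Finset.univ) : a i ≤ n := (Finset.le_sup hi).trans (Nat.le_add_right _ _)
  have b_le j (hj : j ∈ Finset.univ) : b j ≤ n := (Finset.le_sup hj).trans (Nat.le_add_left _ _)
  rw [sum_mul_comp_eq_layers _ x a c a_le, sum_mul_comp_eq_layers _ y b c b_le]
  refine add_le_add (mul_le_mul_of_nonneg_left ?_ c_zero) (Finset.sum_le_sum fun m _ =>
    mul_le_mul_of_nonneg_left (tails_le (m + 1)) (sub_nonneg.2 (c_mono m.le_succ)))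
  simpa using tails_le 0

end LayerCake

theorem monotoneExt_fracHaemers_of_one_le {α : ℝ} (hα : 1 ≤ α) :
    MonotoneExt (fun V _ _ G => fracHaemers ℂ (V := V) G) α := by
  intro r s V W _ _ _ _ G H h
  obtain ⟨F, f, hF⟩ := h.exists_isVertexLocalized
  let weight (n : ℕ) : ℝ := ((n + 1 : ℕ) : ℝ) ^ (α - 1)
  have weight_mono : Monotone weight := fun m n hmn =>
    Real.rpow_le_rpow (by positivity) (by gcongr) (by linarith)
  have rpow_eq (n : ℕ) : ((n + 1 : ℕ) : ℝ) ^ α = (n + 1) * weight n := by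
    rw [← Nat.cast_succ, mul_comm, ← Real.rpow_add_one (by positivity), sub_add_cancel]
  simpa only [rpow_eq, ← mul_assoc] using
    sum_mul_comp_le_of_tails_le hF.sum_filter_fracHaemers_le (c := weight) (by positivity)
      weight_mono

section Qubit

theorem cohom_of_le_span_one {A B : Type} [Fintype A] [DecidableEq A] [Fintype B] [DecidableEq B]
    {T : Submodule ℂ (Matrix B B ℂ)} {S : Submodule ℂ (Matrix A A ℂ)} (e : B ≃ A)
    (hT : 1 ∈ T) (hS : S ≤ Submodule.span ℂ {1}) : Cohom T S := by
  let U : Matrix A B ℂ := (1 : Matrix A A ℂ).submatrix id e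
  have gram_eq_one : Uᴴ * U = 1 := by
    rw [conjTranspose_submatrix, conjTranspose_one,
      ← submatrix_mul _ _ _ _ _ Function.bijective_id, Matrix.one_mul, submatrix_one_equiv]
  refine ⟨1, fun _ => U, by simpa using gram_eq_one, fun _ _ M hM => ?_⟩
  obtain ⟨c, rfl⟩ := Submodule.mem_span_singleton.1 (hS hM)
  simpa [gram_eq_one] using T.smul_mem c hT

theorem bigSum_le_span_one {r : ℕ} {V : Fin r → Type} [∀ d, Fintype (V d)]
    [∀ d, DecidableEq (V d)] [Unique (Σ d, V d)] (G : ∀ d, SimpleGraph (V d)) :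
    bigSum G ≤ Submodule.span ℂ {1} := by
  intro N hN
  obtain ⟨A, -, rfl⟩ := mem_bigSum_iff.1 hN
  let u : Σ d, V d := default
  refine Submodule.mem_span_singleton.2 ⟨A u.1 u.2 u.2, ?_⟩
  ext a b
  have vertex_a : vertex a = u := Subsingleton.elim _ _
  rw [amplify_apply_of_vertex_eq A (Subsingleton.elim _ _), ← vertex_a]
  simp [one_apply, vertex]

/-- As `Fin d.1` is empty for `d = 0` and a single point for `d = 1`, the second sum is `Q_2`. -/
theorem cohom_twoPoints_qubit :
    Cohom (bigSum fun _ : Fin 1 => (⊥ : SimpleGraph (Fin 2)))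
      (bigSum fun d : Fin 2 => (⊥ : SimpleGraph (Fin d.1))) := by
  have : Unique (Σ d : Fin 2, Fin d.1) :=
    (Fintype.card_eq_one_iff_nonempty_unique.1 (by decide)).some
  exact cohom_of_le_span_one (Fintype.equivOfCardEq (by decide)) one_mem_bigSum
    (bigSum_le_span_one _)

theorem one_le_of_monotoneExt_fracHaemers {α : ℝ}
    (h : MonotoneExt (fun V _ _ G => fracHaemers ℂ (V := V) G) α) : 1 ≤ α := by
  have two_le : (2 : ℝ) ≤ 2 ^ α := by
    simpa [fracHaemers_bot, one_add_one_eq_two] using h _ _ _ _ _ _ cohom_twoPoints_qubit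
  exact (Real.rpow_le_rpow_left_iff one_lt_two).1 (by simpa using two_le)

end Qubit

theorem fracHaemersC_admissible_iff (α : ℝ) :
    MonotoneExt (fun (V : Type) (iV : Fintype V) (eV : DecidableEq V)
      (G : SimpleGraph V) => @fracHaemers ℂ _ V iV eV G) α ↔ 1 ≤ α :=
  ⟨one_le_of_monotoneExt_fracHaemers, monotoneExt_fracHaemers_of_one_le⟩

end NCG
end
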